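/- arXiv:1708.07209 — 2 statements merged into one kernel-verified Lean document; each statement's English description precedes it below -/
import Mathlib

section
/- Let A and B be core synchronous transducers on X_n, both synchronizing at level k ≥ 1. Then f_A = f_B if and only if \overline{A}_{k+1} = \overline{B}_{k+1}. -/
/-!
Both conditions say that `A` and `B` have the same local rule: after any word `w` of
length `k`, from any starting states, the two transducers write the same letter on
reading `x` (`Transducer.SameRule`).

* `f_A = f_B` is this condition read at coordinate `0`, since any word `w ++ [x]` occurs
  on the positions `-k, …, 0` of some bi-infinite sequence.
* If the rules agree, let `q` be a state with `q = A.stepW Γ q`. Running `A` on `Γ` from `q`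
  is running it after `Γ` itself has been read, so every letter of the output is written
  after at least `k` letters of input and is given by the local rule. Hence the bar maps agree.
* Conversely, the last letter of the bar map on `w ++ [x]` is the value of the local rule
  at `w`, `x`, since the word `w` of length `k` is synchronizing.
-/

/-- A synchronous transducer with alphabet `X` and state set `Q`:
`step x q` is the state reached after reading letter `x` at state `q`, and
`out x q` is the letter written. -/
structure Transducer (X : Type*) (Q : Type*) where
  step : X → Q → Q
  out : X → Q → X

namespace Transducer

variable {X Q R : Type*}

/-- The transition function extended to words (read left to right). -/
def stepW (T : Transducer X Q) : List X → Q → Q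
  | [], q => q
  | x :: w, q => T.stepW w (T.step x q)

/-- The output function extended to words. -/
def outW (T : Transducer X Q) : List X → Q → List X
  | [], _ => []
  | x :: w, q => T.out x q :: T.outW w (T.step x q)

theorem stepW_append (T : Transducer X Q) (u v : List X) (q : Q) :
    T.stepW (u ++ v) q = T.stepW v (T.stepW u q) := by
  induction u generalizing q with
  | nil => rfl
  | cons x u ih => simpa [stepW] using ih (T.step x q)

/-- `T` is synchronizing at level `k`: the state reached after reading any word of
length `k` is independent of the starting state. -/
def Synchronizing (T : Transducer X Q) (k : ℕ) : Prop :=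
  ∀ Γ : List X, Γ.length = k → ∀ p q : Q, T.stepW Γ p = T.stepW Γ q

/-- A state is in the core of `T` if it is forced by some nonempty word. -/
def InCore (T : Transducer X Q) (q : Q) : Prop :=
  ∃ Γ : List X, Γ ≠ [] ∧ ∀ p : Q, T.stepW Γ p = q

/-- `T` is core if every state is forced. -/
def IsCore (T : Transducer X Q) : Prop := ∀ q : Q, T.InCore q

/-- The map on one-sided infinite sequences induced by the state `q`. -/
def stateMap (T : Transducer X Q) (q : Q) (x : ℕ → X) : ℕ → X :=
  fun i => T.out (x i) (T.stepW ((List.range i).map x) q)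

/-- Every state of `T` is a homeomorphism state. -/
def AllHomeo (T : Transducer X Q) : Prop := ∀ q : Q, Function.Bijective (T.stateMap q)

/-- `T` is invertible: every state acts as a bijection on single letters. -/
def Invertible (T : Transducer X Q) : Prop :=
  ∀ q : Q, Function.Bijective fun x => T.out x q

/-- The map `f_T` on bi-infinite sequences induced by a transducer synchronizing at
level `k`; the letter at position `i` of the image is obtained by processing `x i`
from the state reached after reading `x (i-k), …, x (i-1)` starting at the basepoint
state `q0` (when `T` is synchronizing at level `k` this is the forced state, and the
map does not depend on the choice of `q0`). -/
def zmap (T : Transducer X Q) (k : ℕ) (q0 : Q) (x : ℤ → X) : ℤ → X :=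
  fun i => T.out (x i) (T.stepW ((List.range k).map fun j => x (i - (k : ℤ) + (j : ℤ))) q0)

/-- The composite map on one-sided sequences represented by a word of states,
applied leftmost letter first. -/
def wordMap (T : Transducer X Q) : List Q → (ℕ → X) → ℕ → X
  | [], x => x
  | q :: w, x => T.wordMap w (T.stateMap q x)

/-- A bi-infinite sequence is rational if it is eventually periodic in both directions. -/
def IsRational (z : ℤ → X) : Prop :=
  ∃ (N p q : ℕ), 0 < p ∧ 0 < q ∧
    (∀ i : ℤ, (N : ℤ) ≤ i → z (i + (p : ℤ)) = z i) ∧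
    (∀ i : ℤ, i ≤ -(N : ℤ) → z (i - (q : ℤ)) = z i)

/-- The inverse transducer of an invertible transducer. -/
noncomputable def invT (T : Transducer X Q) (hX : Nonempty X) : Transducer X Q where
  step := fun y q => T.step (@Function.invFun X X hX (fun x => T.out x q) y) q
  out := fun y q => @Function.invFun X X hX (fun x => T.out x q) y

/-- The product transducer `A*B`. -/
def prodT (T : Transducer X Q) (S : Transducer X R) : Transducer X (Q × R) where
  step := fun x pq => (T.step x pq.1, S.step (T.out x pq.1) pq.2)
  out := fun x pq => S.out (T.out x pq.1) pq.2

/-- The `m`-fold power `A^m`, with state set `Q^m`. -/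
def powT (T : Transducer X Q) : (m : ℕ) → Transducer X (Fin m → Q)
  | 0 => { step := fun _ u => u, out := fun x _ => x }
  | m + 1 =>
    { step := fun x u =>
        Fin.cons (T.step x (u 0)) ((T.powT m).step (T.out x (u 0)) fun i => u i.succ)
      out := fun x u => (T.powT m).out (T.out x (u 0)) fun i => u i.succ }

/-- The restriction of a transducer to its core. -/
def coreT (T : Transducer X Q) : Transducer X {q : Q // T.InCore q} where
  step := fun x q =>
    ⟨T.step x q.1, by
      obtain ⟨Γ, hΓ, h⟩ := q.2
      exact ⟨Γ ++ [x], by simp, fun p => by rw [T.stepW_append, h p]; rfl⟩⟩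
  out := fun x q => T.out x q.1

/-- `Γ_l^P`: the word obtained by passing `Γ` successively through the states in `P`. -/
def iterW (T : Transducer X Q) : List Q → List X → List X
  | [], Γ => Γ
  | p :: P, Γ => T.iterW P (T.outW Γ p)

/-- The list of states `out_i^P` reached when passing `Γ` successively through `P`. -/
def iterOuts (T : Transducer X Q) : List Q → List X → List Q
  | [], _ => []
  | p :: P, Γ => T.stepW Γ p :: T.iterOuts P (T.outW Γ p)

/-- `((t :: Tt), (p :: Tp), Γ)` is a split (forced states computed from the
basepoint state `q0`). -/
def SplitCond (T : Transducer X Q) (q0 : Q) (t p : Q) (Tt Tp : List Q) (Γ : List X) : Prop :=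
  Tt.length = Tp.length ∧
  T.iterOuts (t :: Tt) Γ = T.iterOuts (p :: Tp) Γ ∧
  (∀ i : ℕ, 1 ≤ i → i < (t :: Tt).length →
    T.stepW (T.iterW ((t :: Tt).take i) Γ) q0 = T.stepW (T.iterW ((p :: Tp).take i) Γ) q0) ∧
  T.stepW (T.iterW (t :: Tt) Γ) q0 ≠ T.stepW (T.iterW (p :: Tp) Γ) q0

/-- The bottom of the split `((t :: Tt), (p :: Tp), Γ)` depends only on its top. -/
def DependsOnTop (T : Transducer X Q) (q0 : Q) (t p : Q) (Tt Tp : List Q) (Γ : List X) : Prop :=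
  ∀ U U' : List Q, U.length = Tt.length → U'.length = Tp.length →
    T.iterOuts (t :: U) Γ = T.iterOuts (t :: Tt) Γ ∧
    T.iterOuts (p :: U') Γ = T.iterOuts (p :: Tp) Γ ∧
    T.stepW (T.iterW (t :: U) Γ) q0 = T.stepW (T.iterW (t :: Tt) Γ) q0 ∧
    T.stepW (T.iterW (p :: U') Γ) q0 = T.stepW (T.iterW (p :: Tp) Γ) q0

/-- The edge relation of the graph of bad pairs `G_r(T)` (on unordered pairs of
states, modelled as subsets of `Q`). -/
def BadEdge (T : Transducer X Q) (q0 : Q) (r : ℕ) (v w : Set Q) : Prop :=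
  ∃ (t p : Q) (Tt Tp : List Q) (Γ : List X), Γ.length = r ∧
    T.SplitCond q0 t p Tt Tp Γ ∧ T.DependsOnTop q0 t p Tt Tp Γ ∧
    v = {t, p} ∧
    w = {T.stepW (T.iterW (t :: Tt) Γ) q0, T.stepW (T.iterW (p :: Tp) Γ) q0}

/-- The `r` splitting length of `T`, as an extended natural number (`⊤` if no split
at level `r` exists). -/
noncomputable def splittingLength (T : Transducer X Q) (q0 : Q) (r : ℕ) : ℕ∞ :=
  sInf {L : ℕ∞ | ∃ (t p : Q) (Tt Tp : List Q) (Γ : List X),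
    Γ.length = r ∧ L = ((Tt.length + 1 : ℕ) : ℕ∞) ∧ T.SplitCond q0 t p Tt Tp Γ}

/-- The `i`-th rotation of a word. -/
def rotWord (i : ℕ) (Γ : List X) : List X :=
  Γ.drop (Γ.length - i) ++ Γ.take (Γ.length - i)

/-- A nonempty word is prime if it is not a proper power of a shorter word. -/
def IsPrimeWord (Γ : List X) : Prop :=
  Γ ≠ [] ∧ ∀ (δ : List X) (m : ℕ), 2 ≤ m → Γ ≠ (List.replicate m δ).flatten

/-- The length of the orbit of `Γ` under `f`. -/
noncomputable def orbitLen (f : List X → List X) (Γ : List X) : ℕ :=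
  (Set.range fun m : ℕ => f^[m] Γ).ncard

/-- The minimal `s ≥ 1` such that `f^[s] Γ` is a rotation of `Γ`
(for words of length `k`). -/
noncomputable def sigmaIdx (f : List X → List X) (k : ℕ) (Γ : List X) : ℕ :=
  sInf {s : ℕ | 1 ≤ s ∧ ∃ i < k, f^[s] Γ = rotWord i Γ}

/-- The rotation index attained at the minimal exponent `sigmaIdx`. -/
noncomputable def rhoIdx (f : List X → List X) (k : ℕ) (Γ : List X) : ℕ :=
  sInf {i : ℕ | i < k ∧ f^[sigmaIdx f k Γ] Γ = rotWord i Γ}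

end Transducer

namespace Transducer

/-- After reading any word of length `k`, from any two starting states, `A` and `B` write
the same letter in response to the next input letter. -/
def SameRule {X Q R : Type*} (A : Transducer X Q) (B : Transducer X R) (k : ℕ) : Prop :=
  ∀ (w : List X) (x : X), w.length = k → ∀ (p : Q) (r : R),
    A.out x (A.stepW w p) = B.out x (B.stepW w r)

theorem outW_append_singleton {X Q : Type*} (A : Transducer X Q) (w : List X) (x : X) (q : Q) :
    A.outW (w ++ [x]) q = A.outW w q ++ [A.out x (A.stepW w q)] := by
  induction w generalizing q with
  | nil => rfl
  | cons y w ih => simp [outW, stepW, ih]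

/-- Once at least `k` letters have been read, transducers with the same local rule write
the same words. -/
theorem SameRule.outW_eq {X Q R : Type*} {A : Transducer X Q} {B : Transducer X R} {k : ℕ}
    (h : SameRule A B k) (w u : List X) (hu : k ≤ u.length) (p : Q) (r : R) :
    A.outW w (A.stepW u p) = B.outW w (B.stepW u r) := by
  induction w generalizing u with
  | nil => rfl
  | cons x w ih =>
    have hhead : A.out x (A.stepW u p) = B.out x (B.stepW u r) := by
      -- Only the last `k` letters of `u` matter.
      rw [← List.take_append_drop (u.length - k) u, stepW_append, stepW_append]
      exact h _ _ (by rw [List.length_drop]; omega) _ _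
    have htail := ih (u ++ [x]) (by rw [List.length_append]; omega)
    rw [stepW_append, stepW_append] at htail
    exact congrArg₂ List.cons hhead htail

/-- The definition of `zmap` maps over the list of integers obtained by coercing
`List.range k` monadically; here the window is indexed by natural numbers. -/
theorem zmap_apply {X Q : Type*} (T : Transducer X Q) (k : ℕ) (q0 : Q) (x : ℤ → X) (i : ℤ) :
    T.zmap k q0 x i = T.out (x i)
      (T.stepW ((List.range k).map fun j : ℕ => x (i - (k : ℤ) + (j : ℤ))) q0) := by
  simp [zmap, ← List.map_eq_flatMap, Function.comp_def]

theorem zmap_eq_iff_sameRule {X Q R : Type*} {A : Transducer X Q} {B : Transducer X R} {k : ℕ}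
    (hA : A.Synchronizing k) (hB : B.Synchronizing k) (a0 : Q) (b0 : R) :
    A.zmap k a0 = B.zmap k b0 ↔ SameRule A B k := by
  constructor
  · intro h w x hw p r
    -- A bi-infinite sequence reading `w` on the positions `-k, …, -1` and `x` at `0`.
    have h0 := congrFun (congrFun h fun j : ℤ => w.getD (j + k).toNat x) 0
    have hword : ((List.range k).map fun j : ℕ =>
        w.getD ((0 : ℤ) - (k : ℤ) + (j : ℤ) + k).toNat x) = w := by
      apply List.ext_getElem
      · simp [hw]
      · intro i h1 h2
        have hi : ((0 : ℤ) - (k : ℤ) + (i : ℤ) + k).toNat = i := by omega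
        simp only [List.getElem_map, List.getElem_range]
        rw [hi]
        simp [h2]
    have hx : w.getD ((0 : ℤ) + k).toNat x = x := by simp [hw]
    rw [zmap_apply, zmap_apply, hword, hx] at h0
    rw [hA w hw p a0, hB w hw r b0]
    exact h0
  · intro h
    funext x i
    exact h _ _ (by simp) _ _

end Transducer

/-- Let `A` and `B` be core synchronous transducers on `X_n`, both
synchronizing at level `k ≥ 1`.  Then `f_A = f_B` if and only if
`\overline{A}_{k+1} = \overline{B}_{k+1}`. -/
theorem zmap_eq_iff_bar_eq
    (n : ℕ) (hn : 2 ≤ n) {QA QB : Type*} [Fintype QA] [Fintype QB]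
    (A : Transducer (Fin n) QA) (B : Transducer (Fin n) QB)
    (k : ℕ) (hk : 1 ≤ k) (a0 : QA) (b0 : QB)
    (hAcore : A.IsCore) (hBcore : B.IsCore)
    (hAsync : A.Synchronizing k) (hBsync : B.Synchronizing k)
    (barA barB : List (Fin n) → List (Fin n))
    (hbarA : ∀ Γ : List (Fin n), Γ ≠ [] →
      ∃ q : QA, A.stepW Γ q = q ∧ barA Γ = A.outW Γ q)
    (hbarB : ∀ Γ : List (Fin n), Γ ≠ [] →
      ∃ q : QB, B.stepW Γ q = q ∧ barB Γ = B.outW Γ q) :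
    A.zmap k a0 = B.zmap k b0 ↔
      ∀ Γ : List (Fin n), Γ.length = k + 1 → barA Γ = barB Γ := by
  rw [Transducer.zmap_eq_iff_sameRule hAsync hBsync]
  constructor
  · intro h Γ hΓ
    have hne : Γ ≠ [] := List.ne_nil_of_length_pos (by omega)
    obtain ⟨p, hp, hbA⟩ := hbarA Γ hne
    obtain ⟨r, hr, hbB⟩ := hbarB Γ hne
    have key := h.outW_eq Γ Γ (by omega) p r
    rw [hp, hr] at key
    rw [hbA, hbB, key]
  · intro h w x hw p r
    obtain ⟨q, -, hbA⟩ := hbarA (w ++ [x]) (by simp)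
    obtain ⟨s, -, hbB⟩ := hbarB (w ++ [x]) (by simp)
    have key := h (w ++ [x]) (by simp [hw])
    rw [hbA, hbB, Transducer.outW_append_singleton, Transducer.outW_append_singleton] at key
    rw [hAsync w hw p q, hBsync w hw r s]
    exact List.singleton_inj.mp (List.append_inj_right' key rfl)
end

section
/- Let A be a core synchronous transducer on X_n synchronizing at level k and let m ≥ 1. If the mk splitting length of A is finite, then the (m+1)k splitting length of A is strictly greater than the mk splitting length of A. -/
namespace Transducer

variable {X Q : Type*} (T : Transducer X Q)

theorem length_outW (w : List X) (q : Q) : (T.outW w q).length = w.length := by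
  induction w generalizing q with
  | nil => rfl
  | cons x w ih => simp [outW, ih]

theorem length_iterW (P : List Q) (w : List X) : (T.iterW P w).length = w.length := by
  induction P generalizing w with
  | nil => rfl
  | cons p P ih => simp [iterW, ih, length_outW]

theorem length_iterOuts (P : List Q) (w : List X) : (T.iterOuts P w).length = P.length := by
  induction P generalizing w with
  | nil => rfl
  | cons p P ih => simp [iterOuts, ih]

theorem take_iterOuts (i : ℕ) (P : List Q) (w : List X) :
    T.iterOuts (P.take i) w = (T.iterOuts P w).take i := by
  induction P generalizing w i with
  | nil => simp [iterOuts]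
  | cons p P ih => cases i <;> simp [iterOuts, ih]

theorem outW_append (u v : List X) (q : Q) :
    T.outW (u ++ v) q = T.outW u q ++ T.outW v (T.stepW u q) := by
  induction u generalizing q with
  | nil => rfl
  | cons x u ih => simp [outW, stepW, ih]

theorem iterOuts_append (P : List Q) (u v : List X) :
    T.iterOuts P (u ++ v) = T.iterOuts (T.iterOuts P u) v := by
  induction P generalizing u v with
  | nil => rfl
  | cons p P ih => simp [iterOuts, stepW_append, outW_append, ih]

theorem iterW_append (P : List Q) (u v : List X) :
    T.iterW P (u ++ v) = T.iterW P u ++ T.iterW (T.iterOuts P u) v := by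
  induction P generalizing u v with
  | nil => rfl
  | cons p P ih => simp [iterW, iterOuts, outW_append, ih]

variable {T}

theorem Synchronizing.stepW_eq {k : ℕ} (h : T.Synchronizing k) {w : List X}
    (hw : k ≤ w.length) (p q : Q) : T.stepW w p = T.stepW w q := by
  rw [← List.take_append_drop k w, stepW_append, stepW_append,
    h (w.take k) (by simpa using hw) p q]

/-- The state forced by `u ++ v` after a run through `P` is the one forced by the suffix `v`
after a run through the states that `P` reaches on `u`. -/
theorem Synchronizing.stepW_iterW_append {k : ℕ} (h : T.Synchronizing k) (P : List Q)
    (u : List X) {v : List X} (hv : k ≤ v.length) (q : Q) :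
    T.stepW (T.iterW P (u ++ v)) q = T.stepW (T.iterW (T.iterOuts P u) v) q := by
  rw [iterW_append, stepW_append]
  exact h.stepW_eq (by rwa [length_iterW]) _ _

/-- Removing the first layer and the first `k` letters of a split gives a shorter split. -/
theorem SplitCond.exists_shorter {k : ℕ} (h : T.Synchronizing k) {q0 t p : Q}
    {Tt Tp : List Q} {Δ Γ : List X} (hΔ : Δ.length = k) (hΓ : k ≤ Γ.length)
    (hs : T.SplitCond q0 t p Tt Tp (Δ ++ Γ)) :
    ∃ (t' p' : Q) (Tt' Tp' : List Q) (Γ' : List X), Γ'.length = Γ.length ∧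
      Tt.length = Tt'.length + 1 ∧ T.SplitCond q0 t' p' Tt' Tp' Γ' := by
  obtain ⟨hlen, houts, hmid, hlast⟩ := hs
  simp only [h.stepW_iterW_append _ _ hΓ, iterOuts_append, take_iterOuts] at houts hmid hlast
  have htp : T.stepW Δ p = T.stepW Δ t := h Δ hΔ p t
  match Tt, Tp, hlen with
  | [], [], _ => simp [iterOuts, iterW, htp] at hlast
  | a :: Tt, b :: Tp, hlen =>
    refine ⟨T.stepW (T.outW Δ t) a, T.stepW (T.outW Δ p) b,
      T.iterOuts Tt (T.outW (T.outW Δ t) a), T.iterOuts Tp (T.outW (T.outW Δ p) b),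
      T.outW Γ (T.stepW Δ t), T.length_outW _ _, by simp [length_iterOuts], ?_, ?_, ?_, ?_⟩
    · simpa [length_iterOuts] using hlen
    · simpa [iterOuts, htp] using houts
    · intro i h1 h2
      -- Layer `i` of the new split is layer `i + 1` of the old one.
      have := hmid (i + 1) (by omega) (by simpa [length_iterOuts] using h2)
      simpa [iterOuts, iterW, htp] using this
    · simpa [iterOuts, iterW, htp] using hlast

end Transducer

/-- Let `A` be a core synchronous transducer on `X_n` synchronizing at
level `k` and let `m ≥ 1`.  If the `mk` splitting length of `A` is finite, then the
`(m+1)k` splitting length of `A` is strictly greater than the `mk` splitting length. -/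
theorem splitting_length_strictly_increasing
    (n : ℕ) (hn : 2 ≤ n) {Q : Type*} [Fintype Q]
    (A : Transducer (Fin n) Q) (k m : ℕ) (hm : 1 ≤ m) (q0 : Q)
    (hcore : A.IsCore) (hsync : A.Synchronizing k)
    (hfin : A.splittingLength q0 (m * k) ≠ ⊤) :
    A.splittingLength q0 (m * k) < A.splittingLength q0 ((m + 1) * k) := by
  have hkm : k ≤ m * k := Nat.le_mul_of_pos_left k hm
  rcases eq_or_ne (A.splittingLength q0 ((m + 1) * k)) ⊤ with htop | htop
  · rw [htop]
    exact lt_of_le_of_ne le_top hfin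
  -- The infimum is attained, by well-foundedness of `ℕ∞`.
  have hmem := csInf_mem (s := {L : ℕ∞ | ∃ (t p : Q) (Tt Tp : List Q) (Γ : List (Fin n)),
      Γ.length = (m + 1) * k ∧ L = ((Tt.length + 1 : ℕ) : ℕ∞) ∧ A.SplitCond q0 t p Tt Tp Γ}) (by
    by_contra hne
    rw [Set.not_nonempty_iff_eq_empty] at hne
    exact htop (by rw [Transducer.splittingLength, hne, sInf_empty]))
  obtain ⟨t, p, Tt, Tp, Γ, hΓ, hL, hs⟩ := hmem
  rw [add_one_mul] at hΓ
  rw [← List.take_append_drop k Γ] at hs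
  obtain ⟨t', p', Tt', Tp', Γ', hΓ', hlen, hs'⟩ :=
    hs.exists_shorter hsync (by simp; omega) (by simp; omega)
  have hle : A.splittingLength q0 (m * k) ≤ ((Tt'.length + 1 : ℕ) : ℕ∞) :=
    sInf_le ⟨t', p', Tt', Tp', Γ', by rw [hΓ', List.length_drop]; omega, rfl, hs'⟩
  refine hle.trans_lt ?_
  rw [Transducer.splittingLength, hL]
  exact_mod_cast (by omega : Tt'.length + 1 < Tt.length + 1)
end
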